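/- Let 𝓘 be the dyadic interval set, Θ ⊆ ℝ^n a convex set, and ℓ_t : Θ → ℝ convex loss functions for t ≥ 1. For each I ∈ 𝓘 let (θ_t(I))_{t∈I} ⊆ Θ be given. Set η_I = min{1/2, 1/√|I|} and ACT(t) = {I ∈ 𝓘 : t ∈ I}. Define, for I = [q,s] ∈ 𝓘, the unnormalized weights w̃_t(I) = 0 for t < q, w̃_q(I) = 1, w̃_{t+1}(I) = w̃_t(I)(1 + η_I ρ_t r_t(I)) for q ≤ t ≤ s, and w̃_t(I) = w̃_{s+1}(I) for t > s+1; the active-learner weights w_t(I) = η_I w̃_t(I) for t ∈ I and 0 otherwise; the ensemble estimate θ̂_t = (Σ_{I∈ACT(t)} w_t(I) θ_t(I)) / (Σ_{I∈ACT(t)} w_t(I)); the estimated regret r_t(I) = ℓ_t(θ̂_t) − ℓ_t(θ_t(I)); and ρ_t = 1 / max_{I∈ACT(t)} |r_t(I)| (with ρ_t = 1 if the maximum is 0). Then for every integer t ≥ 1: Σ_{I∈𝓘} w̃_t(I) ≤ t(log₂ t + 1). -/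

import Mathlib

/-!
Let `S t` be the total unnormalized weight of the intervals that have started by time `t`.
Between `t` and `t + 1` the weights of the intervals already started change in total by
`ρ_t ∑_{I ∈ ACT t} w_t(I) r_t(I)`, which is nonpositive: `ρ_t ≥ 0`, and Jensen's inequality at the
weighted average `θ̂_t` gives `∑ w_t(I) r_t(I) ≤ 0` (`sum_weight_regret_nonpos`). Jensen needs
nonnegative weights, which holds because each update factor is at least `1 - 1/2`
(`|ρ_t r_t(I)| ≤ 1` and `η_I ≤ 1/2`). The intervals starting at `t + 1` have distinct
lengths, so there are at most `⌊log₂ (t + 1)⌋ + 1` of them (`card_starting_le`), each of weight `1`.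
Hence `S (t + 1) ≤ S t + ⌊log₂ (t + 1)⌋ + 1`, and summing gives `S t ≤ t (⌊log₂ t⌋ + 1)`.
-/

open Finset

/-- The dyadic interval indexed by `(j, k)` (with `k ≥ 1`):
the integer interval `[k·2^j, (k+1)·2^j − 1]`, which has `2^j` elements. -/
def dyadicI (j k : ℕ) : Finset ℕ := Finset.Icc (k * 2 ^ j) ((k + 1) * 2 ^ j - 1)

/-- `ACT t`: the (indices of the) dyadic intervals containing `t`.  Any dyadic
interval `(j, k)` containing `t ≥ 1` has `j ≤ log₂ t` and `1 ≤ k ≤ t`, so this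
finite set is exactly `{I ∈ 𝓘 : t ∈ I}`. -/
def ACT (t : ℕ) : Finset (ℕ × ℕ) :=
  ((Finset.Iic (Nat.log 2 t)) ×ˢ (Finset.Icc 1 t)).filter fun p => t ∈ dyadicI p.1 p.2

/-- The OCELAD learning rate of a dyadic interval of length `2^j`:
`η_I = min {1/2, 1/√|I|}`. -/
noncomputable def ηI (j : ℕ) : ℝ := min (1 / 2) (1 / Real.sqrt (2 ^ j))

/-- Indices of the dyadic intervals whose left endpoint is at most `t`. -/
def started (t : ℕ) : Finset (ℕ × ℕ) :=
  ((Finset.Iic (Nat.log 2 t)) ×ˢ (Finset.Icc 1 t)).filter (fun p => p.2 * 2 ^ p.1 ≤ t)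

/-- The range bounds on `j` and `k` in `started` follow from `k * 2 ^ j ≤ t` and `1 ≤ k`. -/
lemma mem_started {t j k : ℕ} : (j, k) ∈ started t ↔ 1 ≤ k ∧ k * 2 ^ j ≤ t := by
  simp only [started, mem_filter, mem_product, mem_Iic, mem_Icc]
  constructor
  · rintro ⟨⟨_, h, _⟩, hle⟩
    exact ⟨h, hle⟩
  · rintro ⟨h, hle⟩
    have h2 : 1 ≤ 2 ^ j := Nat.one_le_two_pow
    have hj : 2 ^ j ≤ t := by nlinarith
    exact ⟨⟨Nat.le_log_of_pow_le (by norm_num) hj, h, by nlinarith⟩, hle⟩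

lemma mem_dyadicI {t j k : ℕ} : t ∈ dyadicI j k ↔ k * 2 ^ j ≤ t ∧ t < (k + 1) * 2 ^ j := by
  have : 0 < (k + 1) * 2 ^ j := by positivity
  rw [dyadicI, mem_Icc]
  omega

lemma mem_ACT {t j k : ℕ} : (j, k) ∈ ACT t ↔ 1 ≤ k ∧ t ∈ dyadicI j k := by
  have h := @mem_started t j k
  simp only [started, mem_filter, mem_product, mem_Iic, mem_Icc] at h
  simp only [ACT, mem_filter, mem_product, mem_Iic, mem_Icc]
  have h2 := @mem_dyadicI t j k
  tauto

lemma ACT_eq_filter (t : ℕ) : ACT t = (started t).filter (fun p => t ∈ dyadicI p.1 p.2) := by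
  ext ⟨j, k⟩
  rw [mem_filter, mem_ACT, mem_started]
  have h2 := @mem_dyadicI t j k
  tauto

lemma started_filter_le (t : ℕ) :
    (started (t + 1)).filter (fun p => p.2 * 2 ^ p.1 ≤ t) = started t := by
  ext ⟨j, k⟩
  rw [mem_filter, mem_started, mem_started]
  constructor
  · rintro ⟨⟨h, _⟩, hle⟩
    exact ⟨h, hle⟩
  · rintro ⟨h, hle⟩
    exact ⟨⟨h, by omega⟩, hle⟩

/-- At most one dyadic interval of each length starts at `t + 1`. -/
lemma card_starting_le (t : ℕ) :
    ((started (t + 1)).filter (fun p => ¬ p.2 * 2 ^ p.1 ≤ t)).card ≤ Nat.log 2 (t + 1) + 1 := by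
  have hc : (Finset.Iic (Nat.log 2 (t + 1))).card = Nat.log 2 (t + 1) + 1 := by simp
  rw [← hc]
  refine Finset.card_le_card_of_injOn Prod.fst ?_ ?_
  · intro p hp
    simp only [started, mem_coe, mem_filter, mem_product] at hp
    exact mod_cast hp.1.1.1
  · rintro ⟨j, k⟩ hp ⟨j', k'⟩ hp' hjj
    rw [mem_coe, mem_filter, mem_started] at hp hp'
    dsimp only at hp hp' hjj
    subst hjj
    have he : k * 2 ^ j = k' * 2 ^ j := by omega
    rw [Nat.eq_of_mul_eq_mul_right (by positivity) he]

lemma ηI_nonneg (j : ℕ) : 0 ≤ ηI j := by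
  unfold ηI
  positivity

lemma ηI_pos (j : ℕ) : 0 < ηI j := by
  unfold ηI
  positivity

lemma ηI_le_half (j : ℕ) : ηI j ≤ 1 / 2 := min_le_left _ _

/-- Jensen's inequality: against the weighted average, the weighted regrets sum to at most `0`. -/
lemma sum_weight_regret_nonpos {ι E : Type*} [AddCommGroup E] [Module ℝ E] {Θ : Set E}
    {f : E → ℝ} (hf : ConvexOn ℝ Θ f) (s : Finset ι) (v : ι → ℝ) (x : ι → E)
    (hv : ∀ i ∈ s, 0 ≤ v i) (hpos : 0 < ∑ i ∈ s, v i) (hx : ∀ i ∈ s, x i ∈ Θ) :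
    ∑ i ∈ s, v i * (f ((∑ i ∈ s, v i)⁻¹ • ∑ i ∈ s, v i • x i) - f (x i)) ≤ 0 := by
  have h := hf.map_centerMass_le hv hpos hx
  simp only [Finset.centerMass, Function.comp_apply, smul_eq_mul] at h
  rw [inv_mul_eq_div, le_div_iff₀ hpos] at h
  simp only [mul_sub, Finset.sum_sub_distrib, ← Finset.sum_mul]
  linarith

/-- **Lemma 1.**  Under the OCELAD weight construction with unnormalized weights
`w̃_t(I)` (zero before the interval `I = [q,s]` starts, equal to `1` at `t = q`,
multiplicatively updated by `1 + η_I ρ_t r_t(I)` on `I`, and frozen after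
`t = s+1`), the total unnormalized weight satisfies
`∑_{I∈𝓘} w̃_t(I) ≤ t(log₂ t + 1)` for every `t ≥ 1`.  The sum below ranges over
all dyadic intervals `(j, k)` whose left endpoint `k·2^j` is at most `t`; every
other dyadic interval has `w̃_t(I) = 0`, so this is the full sum over `𝓘`. -/
theorem ocelad_total_weight_bound
    (n : ℕ) (hn : 1 ≤ n)
    (Θ : Set (EuclideanSpace ℝ (Fin n))) (hΘ : Convex ℝ Θ)
    (ℓ : ℕ → EuclideanSpace ℝ (Fin n) → ℝ)
    (hℓconv : ∀ t, ConvexOn ℝ Θ (ℓ t))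
    (θL : ℕ × ℕ → ℕ → EuclideanSpace ℝ (Fin n))
    (hθL : ∀ j k, 1 ≤ k → ∀ t ∈ dyadicI j k, θL (j, k) t ∈ Θ)
    (wt : ℕ × ℕ → ℕ → ℝ)    -- the unnormalized weights `w̃`
    (w : ℕ × ℕ → ℕ → ℝ)     -- the active-learner weights `w`
    (θhat : ℕ → EuclideanSpace ℝ (Fin n))
    (r : ℕ × ℕ → ℕ → ℝ) (ρ : ℕ → ℝ)
    -- definition of `w̃`
    (hwt_zero : ∀ j k, 1 ≤ k → ∀ t < k * 2 ^ j, wt (j, k) t = 0)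
    (hwt_init : ∀ j k, 1 ≤ k → wt (j, k) (k * 2 ^ j) = 1)
    (hwt_rec : ∀ j k, 1 ≤ k → ∀ t ∈ dyadicI j k,
      wt (j, k) (t + 1) = wt (j, k) t * (1 + ηI j * ρ t * r (j, k) t))
    (hwt_frozen : ∀ j k, 1 ≤ k → ∀ t, (k + 1) * 2 ^ j ≤ t →
      wt (j, k) t = wt (j, k) ((k + 1) * 2 ^ j))
    -- `w_t(I) = η_I w̃_t(I)` for `t ∈ I`, and `0` otherwise
    (hw : ∀ j k, 1 ≤ k → ∀ t,
      w (j, k) t = if t ∈ dyadicI j k then ηI j * wt (j, k) t else 0)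
    -- the ensemble estimate is the weighted average of the active learners
    (hθhat : ∀ t, 1 ≤ t →
      θhat t = (∑ I ∈ ACT t, w I t)⁻¹ • ∑ I ∈ ACT t, w I t • θL I t)
    -- the estimated regrets
    (hr : ∀ I t, r I t = ℓ t (θhat t) - ℓ t (θL I t))
    -- `ρ_t = 1 / max_{I ∈ ACT(t)} |r_t(I)|`, with `ρ_t = 1` if the max is `0`
    (hρ : ∀ t, 1 ≤ t →
      ((∀ I ∈ ACT t, r I t = 0) → ρ t = 1) ∧
      ((∃ I ∈ ACT t, r I t ≠ 0) →
        ∃ I ∈ ACT t, ρ t = |r I t|⁻¹ ∧ ∀ J ∈ ACT t, |r J t| ≤ |r I t|)) :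
    ∀ t : ℕ, 1 ≤ t →
      (∑ p ∈ ((Finset.Iic (Nat.log 2 t)) ×ˢ (Finset.Icc 1 t)).filter
          (fun p => p.2 * 2 ^ p.1 ≤ t), wt p t) ≤
        t * (Real.logb 2 t + 1) := by
  -- the normalization `ρ` bounds the scaled regrets of active intervals
  have hρ' : ∀ t, 1 ≤ t → 0 ≤ ρ t ∧ ∀ I ∈ ACT t, |ρ t * r I t| ≤ 1 := by
    intro t ht
    obtain ⟨h1, h2⟩ := hρ t ht
    by_cases h : ∀ I ∈ ACT t, r I t = 0
    · rw [h1 h]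
      exact ⟨zero_le_one, fun I hI => by simp [h I hI]⟩
    · push Not at h
      obtain ⟨I, _, he, hmax⟩ := h2 h
      rw [he]
      refine ⟨by positivity, fun J hJ => ?_⟩
      rw [abs_mul, abs_inv, abs_abs, inv_mul_eq_div]
      exact div_le_one_of_le₀ (hmax J hJ) (abs_nonneg _)
  have hnonneg : ∀ j k, 1 ≤ k → ∀ t, 0 ≤ wt (j, k) t := by
    intro j k hk t
    have hq : 0 < k * 2 ^ j := by positivity
    induction t with
    | zero => rw [hwt_zero j k hk 0 hq]
    | succ t ih =>
      rcases lt_trichotomy (t + 1) (k * 2 ^ j) with h | h | h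
      · rw [hwt_zero j k hk _ h]
      · rw [h, hwt_init j k hk]
        exact zero_le_one
      · by_cases ht : t ∈ dyadicI j k
        · rw [hwt_rec j k hk t ht]
          refine mul_nonneg ih ?_
          have hb := abs_le.1 ((hρ' t (by omega)).2 (j, k) (mem_ACT.2 ⟨hk, ht⟩))
          have h1 := ηI_nonneg j
          have h2 := ηI_le_half j
          nlinarith [hb.1]
        · rw [mem_dyadicI] at ht
          rw [hwt_frozen j k hk (t + 1) (by omega), ← hwt_frozen j k hk t (by omega)]
          exact ih
  have hjensen : ∀ t, 1 ≤ t → ∑ I ∈ ACT t, w I t * r I t ≤ 0 := by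
    intro t ht
    have hwn : ∀ I ∈ ACT t, 0 ≤ w I t := by
      rintro ⟨j, k⟩ hI
      obtain ⟨hk, hm⟩ := mem_ACT.1 hI
      rw [hw j k hk, if_pos hm]
      exact mul_nonneg (ηI_nonneg j) (hnonneg j k hk t)
    -- the singleton interval `[t, t]` is active with initial weight `1`
    have hm : t ∈ dyadicI 0 t := mem_dyadicI.2 (by simp)
    have h1 : wt (0, t) t = 1 := by simpa using hwt_init 0 t ht
    have hpos : 0 < ∑ I ∈ ACT t, w I t := by
      refine Finset.sum_pos' hwn ⟨(0, t), mem_ACT.2 ⟨ht, hm⟩, ?_⟩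
      rw [hw 0 t ht, if_pos hm, h1, mul_one]
      exact ηI_pos 0
    have := sum_weight_regret_nonpos (hℓconv t) (ACT t) (fun I => w I t) (fun I => θL I t) hwn hpos
      (by
        rintro ⟨j, k⟩ hI
        obtain ⟨hk, hm⟩ := mem_ACT.1 hI
        exact hθL j k hk t hm)
    rw [← hθhat t ht] at this
    simpa only [hr] using this
  have hold : ∀ t, 1 ≤ t → ∑ p ∈ started t, wt p (t + 1) ≤ ∑ p ∈ started t, wt p t := by
    intro t ht
    have hstep : ∀ p ∈ started t, wt p (t + 1) =
        wt p t + if t ∈ dyadicI p.1 p.2 then ρ t * (w p t * r p t) else 0 := by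
      rintro ⟨j, k⟩ hp
      obtain ⟨hk, hle⟩ := mem_started.1 hp
      split_ifs with hm
      · rw [hwt_rec j k hk t hm, hw j k hk, if_pos hm]
        ring
      · rw [mem_dyadicI] at hm
        dsimp only at hm
        rw [hwt_frozen j k hk (t + 1) (by omega), ← hwt_frozen j k hk t (by omega), add_zero]
    rw [Finset.sum_congr rfl hstep, Finset.sum_add_distrib, ← Finset.sum_filter, ← ACT_eq_filter,
      ← Finset.mul_sum]
    linarith [mul_nonpos_of_nonneg_of_nonpos (hρ' t ht).1 (hjensen t ht)]
  have hnew : ∀ t, ∑ p ∈ (started (t + 1)).filter (fun p => ¬ p.2 * 2 ^ p.1 ≤ t), wt p (t + 1)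
      ≤ (Nat.log 2 (t + 1) : ℝ) + 1 := by
    intro t
    rw [Finset.sum_congr rfl (g := fun _ => (1 : ℝ))]
    · rw [Finset.sum_const, nsmul_eq_mul, mul_one]
      exact_mod_cast card_starting_le t
    · rintro ⟨j, k⟩ hp
      rw [mem_filter, mem_started] at hp
      obtain ⟨⟨hk, hle⟩, hlt⟩ := hp
      dsimp only at hlt
      have he : t + 1 = k * 2 ^ j := by omega
      rw [he, hwt_init j k hk]
  have hmain : ∀ t : ℕ, ∑ p ∈ started t, wt p t ≤ t * ((Nat.log 2 t : ℝ) + 1) := by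
    intro t
    induction t with
    | zero => simp [started]
    | succ t ih =>
      rw [← Finset.sum_filter_add_sum_filter_not _ (fun p => p.2 * 2 ^ p.1 ≤ t),
        started_filter_le]
      have hn' := hnew t
      have ho : ∑ p ∈ started t, wt p (t + 1) ≤ ∑ p ∈ started t, wt p t := by
        rcases Nat.eq_zero_or_pos t with rfl | ht
        · simp [started]
        · exact hold t ht
      have hlog : (Nat.log 2 t : ℝ) ≤ Nat.log 2 (t + 1) := by
        exact_mod_cast Nat.log_mono_right (Nat.le_succ t)
      have ht0 : (0 : ℝ) ≤ t := Nat.cast_nonneg t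
      push_cast
      nlinarith [mul_le_mul_of_nonneg_left hlog ht0]
  intro t _
  refine (hmain t).trans ?_
  have hlog : (Nat.log 2 t : ℝ) ≤ Real.logb 2 t := by
    exact_mod_cast Real.natLog_le_logb t 2
  gcongr
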